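/- arXiv:2012.06529 — 4 statements merged into one kernel-verified Lean document; each statement's English description precedes it below -/
import Mathlib

section
/- Let G_s(x) = (1/(√(2π)·s))·exp(−x²/(2s²)) denote the density of the centered Gaussian law of standard deviation s. Fix reals r, χ, D' > 0. Then there exist C > 0 and K such that for every integer k ≥ K, every positive integer m with |m − k| ≤ √(k·log k), every w ∈ [kχ − D', kχ], and every β ∈ [0,1): | G_{√m·r}(w − mχ) / G_{√k·r}((m − k + β)·χ) − 1 | ≤ C·k^{−1/2}·(log k)^{3/2}. -/
/-!
Write `d = m - k`, `e = kχ - w ∈ [0, D']`, `s = √(k log k)` and `η = s³ / k²`, which is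
`k^(-1/2) (log k)^(3/2)`. The quotient of the two densities is `exp F` with
`F = log (k / m) / 2 + ((dχ + βχ)² / k - (dχ + e)² / m) / (2 r²)`.
Let `log k ≥ 1`, so that `|d| ≤ s`, `1 ≤ s` and `s / k ≤ η`. The first term is `O(s / k)`. In the
second, replacing `e` by `βχ` costs `O(s / k)` and replacing `1 / m` by `1 / k` costs
`O(s³ / k²)`; this gives `F = O(η)` (`abs_half_log_div_le`, `abs_sq_div_sub_sq_div_le`), and
`|exp F - 1| ≤ 2 |F|` once `|F| ≤ 1`, which holds for large `k` because `η → 0`.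
-/

open Set

noncomputable section

/-- Density of the centered Gaussian law `N(0, s²)`. -/
def gaussDensity (s x : ℝ) : ℝ :=
  (Real.sqrt (2 * Real.pi) * s)⁻¹ * Real.exp (-(x ^ 2) / (2 * s ^ 2))

lemma gaussDensity_div (r k m x y : ℝ) (hr : 0 < r) (hk : 0 < k) (hm : 0 < m) :
    gaussDensity (Real.sqrt m * r) x / gaussDensity (Real.sqrt k * r) y =
      Real.exp (Real.log (k / m) / 2 + (y ^ 2 / k - x ^ 2 / m) / (2 * r ^ 2)) := by
  have hsk : 0 < Real.sqrt k := Real.sqrt_pos.2 hk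
  have hsm : 0 < Real.sqrt m := Real.sqrt_pos.2 hm
  have hpi : 0 < Real.sqrt (2 * Real.pi) := Real.sqrt_pos.2 (by positivity)
  have hE : -(x ^ 2) / (2 * (m * r ^ 2)) =
      (y ^ 2 / k - x ^ 2 / m) / (2 * r ^ 2) + -(y ^ 2) / (2 * (k * r ^ 2)) := by
    field_simp
    ring
  have hlog : Real.exp (Real.log (k / m) / 2) = Real.sqrt k / Real.sqrt m := by
    rw [← Real.log_sqrt (by positivity), Real.exp_log (Real.sqrt_pos.2 (by positivity)),
      Real.sqrt_div hk.le]
  unfold gaussDensity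
  rw [mul_pow, mul_pow, Real.sq_sqrt hk.le, Real.sq_sqrt hm.le, hE, Real.exp_add, Real.exp_add,
    hlog]
  have := Real.exp_pos (-(y ^ 2) / (2 * (k * r ^ 2)))
  field_simp

lemma abs_half_log_div_le (k m s : ℝ) (hk : 0 < k) (hm : k / 2 ≤ m) (hd : |m - k| ≤ s) :
    |Real.log (k / m) / 2| ≤ s / k := by
  have hm0 : 0 < m := by linarith
  obtain ⟨h1, h2⟩ := abs_le.1 hd
  have hs : 0 ≤ s := (abs_nonneg _).trans hd
  have hup : Real.log (k / m) ≤ 2 * (s / k) := by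
    refine (Real.log_le_sub_one_of_pos (by positivity)).trans ?_
    rw [div_sub_one hm0.ne', ← mul_div_assoc, div_le_div_iff₀ hm0 hk]
    nlinarith
  have hlow : -Real.log (k / m) ≤ s / k := by
    rw [← Real.log_inv, inv_div]
    refine (Real.log_le_sub_one_of_pos (by positivity)).trans ?_
    rw [div_sub_one hk.ne']
    gcongr
  have : 0 ≤ s / k := by positivity
  rw [abs_le]
  constructor <;> linarith

/-- The change in the Gaussian exponent, where `a` and `e` are bounded shifts of `dχ` and
`d = m - k` is at most `s`. -/
lemma abs_sq_div_sub_sq_div_le (k m s χ M a e : ℝ) (hk : 0 < k) (hm : k / 2 ≤ m)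
    (hd : |m - k| ≤ s) (hs : 1 ≤ s) (hχ : 0 < χ) (ha : 0 ≤ a) (he : 0 ≤ e)
    (haχ : a ≤ χ) (hM : χ + e ≤ M) :
    |((m - k) * χ + a) ^ 2 / k - ((m - k) * χ + e) ^ 2 / m|
      ≤ 3 * M ^ 2 * (s / k) + 2 * M ^ 2 * (s ^ 3 / k ^ 2) := by
  have hm0 : 0 < m := by linarith
  set d := m - k with hdd
  have hM0 : 0 < M := by linarith
  have hdχ : |d * χ| ≤ s * χ := by
    rw [abs_mul, abs_of_pos hχ]
    gcongr
  obtain ⟨h1, h2⟩ := abs_le.1 hdχ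
  have hsplit : (d * χ + a) ^ 2 / k - (d * χ + e) ^ 2 / m =
      (a - e) * (2 * (d * χ) + a + e) / k + (d * χ + e) ^ 2 * d / (k * m) := by
    rw [hdd]
    field_simp
    ring
  have hes : e ≤ s * e := le_mul_of_one_le_left he hs
  have hMs : s * (χ + e) ≤ s * M := by gcongr
  have hB : |d * χ + e| ≤ M * s := by
    rw [abs_le]
    constructor <;> nlinarith
  have hA : |2 * (d * χ) + a + e| ≤ 3 * M * s := by
    have hχs : χ ≤ s * χ := le_mul_of_one_le_left hχ.le hs
    have : 0 ≤ s * e := by positivity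
    rw [abs_le]
    constructor <;> nlinarith
  have hae : |a - e| ≤ M := by
    rw [abs_le]
    constructor <;> linarith
  have hT1 : |(a - e) * (2 * (d * χ) + a + e) / k| ≤ 3 * M ^ 2 * (s / k) := by
    rw [abs_div, abs_mul, abs_of_pos hk]
    calc |a - e| * |2 * (d * χ) + a + e| / k ≤ M * (3 * M * s) / k := by gcongr
      _ = 3 * M ^ 2 * (s / k) := by ring
  have hT2 : |(d * χ + e) ^ 2 * d / (k * m)| ≤ 2 * M ^ 2 * (s ^ 3 / k ^ 2) := by
    rw [abs_div, abs_mul, abs_pow, abs_of_pos (mul_pos hk hm0)]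
    calc |d * χ + e| ^ 2 * |d| / (k * m) ≤ (M * s) ^ 2 * s / (k * (k / 2)) := by gcongr
      _ = 2 * M ^ 2 * (s ^ 3 / k ^ 2) := by
        field_simp
  rw [hsplit]
  exact (abs_add_le _ _).trans (add_le_add hT1 hT2)

lemma tendsto_rate :
    Filter.Tendsto (fun k : ℕ => (k : ℝ) ^ (-(1 / 2) : ℝ) * Real.log k ^ ((3 : ℝ) / 2))
      Filter.atTop (nhds 0) := by
  have h := (isLittleO_log_rpow_rpow_atTop ((3 : ℝ) / 2)
    (show (0 : ℝ) < 1 / 2 by norm_num)).tendsto_div_nhds_zero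
  refine (h.comp tendsto_natCast_atTop_atTop).congr fun k => ?_
  simp only [Function.comp]
  rw [Real.rpow_neg (Nat.cast_nonneg k), div_eq_mul_inv, mul_comm]

lemma rate_eq (k L : ℝ) (hk : 0 < k) (hL : 0 ≤ L) :
    k ^ (-(1 / 2) : ℝ) * L ^ ((3 : ℝ) / 2) = Real.sqrt (k * L) ^ 3 / k ^ 2 := by
  have h1 : L ^ ((3 : ℝ) / 2) = Real.sqrt L ^ 3 := by
    rw [Real.sqrt_eq_rpow, ← Real.rpow_natCast, ← Real.rpow_mul hL]
    norm_num
  rw [h1, Real.rpow_neg hk.le, ← Real.sqrt_eq_rpow, Real.sqrt_mul hk.le]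
  have hsk : 0 < Real.sqrt k := Real.sqrt_pos.2 hk
  have h2 : k ^ 2 = Real.sqrt k ^ 4 := by
    rw [show Real.sqrt k ^ 4 = (Real.sqrt k ^ 2) ^ 2 by ring, Real.sq_sqrt hk.le]
  rw [h2]
  field_simp

theorem stmt14 (r χ D' : ℝ) (hr : 0 < r) (hχ : 0 < χ) (hD' : 0 < D') :
    ∃ C : ℝ, 0 < C ∧ ∃ K : ℕ, ∀ k : ℕ, K ≤ k → ∀ m : ℕ, 0 < m →
      |(m : ℝ) - k| ≤ Real.sqrt (k * Real.log k) →
      ∀ w ∈ Icc (k * χ - D') (k * χ), ∀ β ∈ Ico (0 : ℝ) 1,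
        |gaussDensity (Real.sqrt m * r) (w - m * χ) /
            gaussDensity (Real.sqrt k * r) (((m : ℝ) - k + β) * χ) - 1|
          ≤ C * (k : ℝ) ^ (-(1 / 2) : ℝ) * Real.log k ^ ((3 : ℝ) / 2) := by
  set M := χ + D' with hM
  have hM0 : 0 < M := by positivity
  set c := 1 + 5 * M ^ 2 / (2 * r ^ 2) with hc
  have hc0 : 0 < c := by positivity
  refine ⟨2 * c, by positivity, ?_⟩
  have hev : ∀ᶠ k : ℕ in Filter.atTop,
      ((k : ℝ) ^ (-(1 / 2) : ℝ) * Real.log k ^ ((3 : ℝ) / 2) < min (1 / 2) (1 / c)) ∧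
        1 ≤ Real.log k ∧ 1 ≤ k :=
    (tendsto_rate.eventually_lt_const (by positivity)).and
      (((Real.tendsto_log_atTop.comp tendsto_natCast_atTop_atTop).eventually_ge_atTop 1).and
        (Filter.eventually_ge_atTop 1))
  obtain ⟨K, hK⟩ := Filter.eventually_atTop.1 hev
  refine ⟨K, fun k hk m hm hd w hw β hβ => ?_⟩
  obtain ⟨hη, hL, hk1⟩ := hK k hk
  have hk1' : (1 : ℝ) ≤ k := by exact_mod_cast hk1
  have hk0 : (0 : ℝ) < k := by linarith
  have hm0 : (0 : ℝ) < m := by exact_mod_cast hm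
  rw [mul_assoc]
  rw [rate_eq _ _ hk0 (by linarith)] at hη ⊢
  set s := Real.sqrt (k * Real.log k) with hs
  have hs2 : s ^ 2 = k * Real.log k := Real.sq_sqrt (by positivity)
  have hs1 : 1 ≤ s := Real.one_le_sqrt.2 (one_le_mul_of_one_le_of_one_le hk1' hL)
  have hsη : s / k ≤ s ^ 3 / k ^ 2 := by
    rw [show s ^ 3 / (k : ℝ) ^ 2 = s / k * Real.log k by
      rw [pow_succ, hs2]
      field_simp]
    exact le_mul_of_one_le_right (by positivity) hL
  set η := s ^ 3 / (k : ℝ) ^ 2 with hηdef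
  obtain ⟨hη1, hη2⟩ := lt_min_iff.1 hη
  have hmk : (k : ℝ) / 2 ≤ m := by
    have : s ≤ 1 / 2 * k := (div_le_iff₀ hk0).1 (hsη.trans hη1.le)
    have := (abs_le.1 hd).1
    linarith
  rw [gaussDensity_div r k m _ _ hr hk0 hm0]
  have hx : (w - m * χ) ^ 2 = (((m : ℝ) - k) * χ + (k * χ - w)) ^ 2 := by ring
  have hy : (((m : ℝ) - k + β) * χ) ^ 2 = (((m : ℝ) - k) * χ + β * χ) ^ 2 := by ring
  rw [hx, hy]
  have hlog := abs_half_log_div_le k m s hk0 hmk hd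
  have hexp := abs_sq_div_sub_sq_div_le k m s χ M (β * χ) (k * χ - w) hk0 hmk hd hs1 hχ
    (mul_nonneg hβ.1 hχ.le) (by linarith [hw.2]) (mul_le_of_le_one_left hχ.le hβ.2.le)
    (by linarith [hw.1])
  set T := (((m : ℝ) - k) * χ + β * χ) ^ 2 / k - (((m : ℝ) - k) * χ + (k * χ - w)) ^ 2 / m
  have hT : |T| ≤ 5 * M ^ 2 * η := by
    have : 3 * M ^ 2 * (s / k) ≤ 3 * M ^ 2 * η := by gcongr
    linarith
  have hF : |Real.log (k / m) / 2 + T / (2 * r ^ 2)| ≤ c * η := by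
    refine (abs_add_le _ _).trans ?_
    rw [abs_div T, abs_of_pos (show 0 < 2 * r ^ 2 by positivity)]
    calc _ ≤ η + 5 * M ^ 2 * η / (2 * r ^ 2) := by
          gcongr
          exact hlog.trans hsη
      _ = c * η := by rw [hc]; ring
  have hcη : c * η ≤ 1 := by
    rw [mul_comm]
    exact ((lt_div_iff₀ hc0).1 hη2).le
  refine (Real.abs_exp_sub_one_le (hF.trans hcη)).trans ?_
  linarith
end
end

section
/- Let Φ be a uniformly contracting C^{1+γ} smooth IFS on a compact interval I (γ > 0), with two maps having distinct fixed points. If Λ_c ≠ {0} (the derivative cocycle is not aperiodic), then there exist t, r ∈ ℝ such that the set F_Φ = {log|f'(y)| : f ∈ Φ, y ∈ I, f(y) = y} is contained in {t + r·m : m ∈ ℤ}. -/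
/-!
Write `z_i = log |f_i'(y_i)|`, where `y_i` is the fixed point of `f_i`. The constant word `iii…` is
unchanged by prepending `i` and codes the point `y_i`: the coded point is a limit of iterates of
`f_i`, hence fixed, and a contraction has only one fixed point (`xc_const`). Since `0` always lies
in `Λ_c`, the hypothesis `Λ_c ≠ {0}` yields some `θ ≠ 0` in `Λ_c`, with data `φ`, `u`. Evaluating
the cohomological equation at `iii…` and cancelling `φ` gives `u * exp (θ z_i * I) = 1` for each
`i`. With `α = arg u` this says `α + θ z_i ∈ 2πℤ`, so `z_i ∈ -α/θ + (2π/θ)ℤ`.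
-/

open MeasureTheory Filter Set
open scoped ENNReal Topology

noncomputable section

/-- `wordComp f ω m = f_{ω 0} ∘ f_{ω 1} ∘ ⋯ ∘ f_{ω (m-1)}`. -/
def wordComp {ι : Type*} (f : ι → ℝ → ℝ) (ω : ℕ → ι) : ℕ → ℝ → ℝ
  | 0 => id
  | m + 1 => wordComp f ω m ∘ f (ω m)

/-- Prepend a symbol to an infinite word. -/
def prepend {ι : Type*} (a : ι) (ω : ℕ → ι) : ℕ → ι := fun m =>
  match m with
  | 0 => a
  | k + 1 => ω k

/-- The metric `d_ρ` on the symbolic space. -/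
def dMet {ι : Type*} (ρ : ℝ) (ω ω' : ℕ → ι) : ℝ :=
  haveI := Classical.propDecidable (ω = ω')
  if ω = ω' then 0 else ρ ^ sInf {m : ℕ | ω m ≠ ω' m}

/-- `κ`-Hölder continuity with respect to the metric `d_ρ`. -/
def IsHolderW {ι : Type*} (κ ρ : ℝ) (φ : (ℕ → ι) → ℂ) : Prop :=
  ∃ H : ℝ, ∀ ω ω', ‖φ ω - φ ω'‖ ≤ H * dMet ρ ω ω' ^ κ

/-- The derivative cocycle `c(a, ω) = -log |f_a'(x_ω)|`. -/
def derivCocycle {ι : Type*} (f : ι → ℝ → ℝ) (xc : (ℕ → ι) → ℝ) (a : ι) (ω : ℕ → ι) : ℝ :=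
  -Real.log |deriv (f a) (xc ω)|

/-- The set `Λ_c` of periods of the derivative cocycle. -/
def LambdaC {ι : Type*} (f : ι → ℝ → ℝ) (xc : (ℕ → ι) → ℝ) (ρ κ : ℝ) : Set ℝ :=
  {θ | ∃ (φ : (ℕ → ι) → ℂ) (u : ℂ), IsHolderW κ ρ φ ∧ (∀ ω, ‖φ ω‖ = 1) ∧ ‖u‖ = 1 ∧
    ∀ (a : ι) (ω : ℕ → ι),
      φ (prepend a ω) = u * Complex.exp (-(((θ * derivCocycle f xc a ω : ℝ) : ℂ)) * Complex.I) * φ ω}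

theorem prepend_const {ι : Type*} (i : ι) : prepend i (fun _ => i) = fun _ => i := by
  funext m
  cases m <;> rfl

theorem wordComp_const {ι : Type*} (f : ι → ℝ → ℝ) (i : ι) (m : ℕ) :
    wordComp f (fun _ => i) m = (f i)^[m] := by
  induction m with
  | zero => rfl
  | succ k ih => rw [Function.iterate_succ, ← ih]; rfl

/-- A constant word codes the fixed point of the corresponding contraction. -/
theorem xc_const {g : ℝ → ℝ} {a b c x₀ x y : ℝ} (hmaps : MapsTo g (Icc a b) (Icc a b))
    (hsmooth : ContDiff ℝ 1 g) (hc : c < 1) (hder : ∀ x ∈ Icc a b, |deriv g x| ≤ c)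
    (hx₀ : x₀ ∈ Icc a b) (hx : Tendsto (fun m => g^[m] x₀) atTop (nhds x))
    (hy : y ∈ Icc a b) (hfix : g y = y) : x = y := by
  have hxI : x ∈ Icc a b :=
    isClosed_Icc.mem_of_tendsto hx (Eventually.of_forall fun m => hmaps.iterate m hx₀)
  have hgx : g x = x := isFixedPt_of_tendsto_iterate hx hsmooth.continuous.continuousAt
  have h := (convex_Icc a b).norm_image_sub_le_of_norm_deriv_le
    (fun z _ => hsmooth.differentiable one_ne_zero z) hder hy hxI
  rw [hgx, hfix] at h
  by_contra hne
  have : 0 < ‖x - y‖ := norm_pos_iff.mpr (sub_ne_zero.mpr hne)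
  nlinarith

theorem zero_mem_LambdaC {ι : Type*} (f : ι → ℝ → ℝ) (xc : (ℕ → ι) → ℝ) (ρ κ : ℝ) :
    (0 : ℝ) ∈ LambdaC f xc ρ κ :=
  ⟨fun _ => 1, 1, ⟨0, by simp⟩, by simp, by simp, by simp⟩

theorem stmt15 {n : ℕ} (hn : 2 ≤ n) (f : Fin n → ℝ → ℝ) (a b : ℝ) (hab : a < b)
    (γ : ℝ) (hγ : 0 < γ)
    (hmaps : ∀ i, MapsTo (f i) (Icc a b) (Icc a b))
    (hsmooth : ∀ i, ContDiff ℝ 1 (f i))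
    (hHolder : ∃ C : ℝ, 0 < C ∧ ∀ i, ∀ x ∈ Icc a b, ∀ y ∈ Icc a b,
      |deriv (f i) x - deriv (f i) y| ≤ C * |x - y| ^ γ)
    (c0 c1 : ℝ) (hc0 : 0 < c0) (hc1 : c1 < 1)
    (hcontr : ∀ i, ∀ x ∈ Icc a b, c0 ≤ |deriv (f i) x| ∧ |deriv (f i) x| ≤ c1)
    (hfix : ∃ i j : Fin n, ∃ y ∈ Icc a b, ∃ z ∈ Icc a b, f i y = y ∧ f j z = z ∧ y ≠ z)
    (x₀ : ℝ) (hx₀ : x₀ ∈ Icc a b)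
    (xc : (ℕ → Fin n) → ℝ)
    (hxc : ∀ ω, Tendsto (fun m => wordComp f ω m x₀) atTop (nhds (xc ω)))
    (ρ : ℝ) (hρ : ρ = (sSup {s : ℝ | ∃ i, ∃ x ∈ Icc a b, s = |deriv (f i) x|}) ^ γ)
    (κ : ℝ) (hκ : κ ∈ Ioc (0 : ℝ) 1)
    (hΛ : LambdaC f xc ρ κ ≠ {0}) :
    ∃ t r : ℝ, ∀ z : ℝ,
      (∃ i, ∃ y ∈ Icc a b, f i y = y ∧ z = Real.log |deriv (f i) y|) →
      ∃ m : ℤ, z = t + r * m := by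
  obtain ⟨θ, hθ, hθ0⟩ : ∃ θ ∈ LambdaC f xc ρ κ, θ ≠ 0 := by
    by_contra! h
    exact hΛ (Subset.antisymm (fun θ hθ => h θ hθ)
      (singleton_subset_iff.mpr (zero_mem_LambdaC f xc ρ κ)))
  obtain ⟨φ, u, -, hφ, hu, heq⟩ := hθ
  refine ⟨-u.arg / θ, 2 * Real.pi / θ, ?_⟩
  rintro z ⟨i, y, hy, hfy, rfl⟩
  have hxy : xc (fun _ => i) = y :=
    xc_const (hmaps i) (hsmooth i) hc1 (fun x hx => (hcontr i x hx).2) hx₀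
      (by simpa only [wordComp_const] using hxc (fun _ => i)) hy hfy
  have h := heq i (fun _ => i)
  have hφ0 : φ (fun _ => i) ≠ 0 := norm_ne_zero_iff.mp (by rw [hφ]; exact one_ne_zero)
  rw [prepend_const, derivCocycle, hxy] at h
  set z := Real.log |deriv (f i) y|
  have h1 := (mul_right_cancel₀ hφ0 ((one_mul _).trans h)).symm
  have hu' : u = Complex.exp (u.arg * Complex.I) := by
    have := Complex.norm_mul_exp_arg_mul_I u
    rw [hu] at this
    simpa using this.symm
  rw [hu', ← Complex.exp_add, Complex.exp_eq_one_iff] at h1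
  obtain ⟨m, hm⟩ := h1
  refine ⟨m, ?_⟩
  have him := congrArg Complex.im hm
  simp at him
  field_simp
  linarith
end
end

section
/- Let Φ be an orientation preserving self-similar IFS on a compact interval I with attractor K. Define Φ_1 = Φ and, for each integer m ≥ 2, Φ_m = {g : g = φ_1∘⋯∘φ_ℓ with φ_1,…,φ_ℓ ∈ Φ, g'(0) < 1/m, and (φ_1∘⋯∘φ_{ℓ−1})'(0) ≥ 1/m}. Then dim_H K = sup{ dim μ : m ∈ ℕ and μ is a self-similar measure with respect to Φ_m and a strictly positive probability vector }, where dim μ = inf{dim_H X : X Borel, μ(X) > 0}. -/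
/-!
The inequality `≥` holds because every self-similar measure of `Φ_m` gives full mass to `K`
(`selfSimilar_support`): the maps contract neighbourhoods of `K` towards `K`, so the mass of a
neighbourhood of radius `R` is at most that of the one of radius `c ^ k * R`, for every `k`.

For `≤`, let `0 < d < dimH K` and fix `x₀ ∈ K`. For each `m` take a maximal family `S m` of words
of `Φ_m` whose points `f_w x₀` are more than `const / m` apart. By maximality `K` is covered by
`#(S m)` intervals of length comparable to `1 / m`, so `#(S m) ≤ C * m ^ d` cannot hold for every
`m` (`dimH_le_of_covers`). Take an `m` for which it fails, with `C = 2 / e ^ d` where `e` is the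
least contraction ratio. The probability vector (`exists_weights`) spreads almost all the mass
evenly over `S m`, and only a total mass of at most `1 / #(S m)` over the remaining words. No
separation of `Φ` is needed: a small interval meets the image of `K` under at most one word of
`S m`, and the other words together carry little mass, so passing from scale `ρ` to `ρ * e / m`
multiplies the largest mass of an interval by at most `2 / #(S m) ≤ (e / m) ^ d`
(`selfSimilar_decay`). The mass distribution principle (`le_dimH_of_decay`) then gives `dim μ ≥ d`.

The measure itself is the law of the random series
`∑ k, ρ (ω 0) ⋯ ρ (ω (k - 1)) * τ (ω k)` for an i.i.d. sequence `ω` of maps `x ↦ ρ a * x + τ a`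
(`exists_selfSimilar`).
-/

open MeasureTheory Filter Set
open scoped ENNReal Topology

noncomputable section

/-- Composition of the maps of an IFS along a finite word:
`compList f [i₁, …, i_ℓ] = f i₁ ∘ ⋯ ∘ f i_ℓ`. -/
def compList {ι : Type*} (f : ι → ℝ → ℝ) : List ι → ℝ → ℝ
  | [] => id
  | i :: l => f i ∘ compList f l

/-- The product of the contraction ratios along a finite word, i.e. `g'(0)` for the
composition `g` of the corresponding affine orientation preserving maps. -/
def ratioProd {n : ℕ} (r : Fin n → ℝ) (w : List (Fin n)) : ℝ := (w.map r).prod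

/-- The induced IFS `Φ_m`, described by the set of finite words
`w = φ₁⋯φ_ℓ` with `g = φ₁∘⋯∘φ_ℓ`, `g'(0) < 1/m` and `(φ₁∘⋯∘φ_{ℓ-1})'(0) ≥ 1/m`.
For `m = 1` this is exactly the set of one-letter words, i.e. `Φ` itself. -/
def Phim {n : ℕ} (r : Fin n → ℝ) (m : ℕ) : Set (List (Fin n)) :=
  {w | w ≠ [] ∧ ratioProd r w < 1 / m ∧ 1 / (m : ℝ) ≤ ratioProd r w.dropLast}

/-- The (lower) Hausdorff dimension of a measure. -/
def dimOf (μ : Measure ℝ) : ℝ≥0∞ :=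
  ⨅ (X : Set ℝ) (_ : MeasurableSet X) (_ : 0 < μ X), dimH X

/-! ### Existence of self-similar measures -/

/-- The sequence obtained by putting `a` in front of `ω`. -/
def seqCons {α : Type*} (a : α) (ω : ℕ → α) : ℕ → α
  | 0 => a
  | k + 1 => ω k

lemma measurable_seqCons {α : Type*} [MeasurableSpace α] (a : α) :
    Measurable (seqCons a : (ℕ → α) → ℕ → α) := by
  refine measurable_pi_lambda _ fun k => ?_
  cases k with
  | zero => exact measurable_const
  | succ k => exact measurable_pi_apply k

/-- An i.i.d. sequence is a random first letter followed by an independent copy of the sequence. -/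
lemma infinitePi_eq_sum_map_seqCons {α : Type*} [Fintype α] [MeasurableSpace α]
    [MeasurableSingletonClass α] (ν : Measure α) [IsProbabilityMeasure ν] :
    Measure.infinitePi (fun _ : ℕ => ν) = Measure.sum
      (fun a : α => ν {a} • (Measure.infinitePi (fun _ : ℕ => ν)).map (seqCons a)) := by
  classical
  set P := Measure.infinitePi (fun _ : ℕ => ν) with hP
  refine (Measure.eq_infinitePi (μ := fun _ : ℕ => ν) ?_).symm
  intro s t ht
  obtain ⟨N, hN⟩ : ∃ N, s ⊆ Finset.range (N + 1) := by
    obtain ⟨N, hN⟩ := s.exists_nat_subset_range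
    exact ⟨N, hN.trans (Finset.range_mono (Nat.le_succ N))⟩
  set u : ℕ → Set α := fun i => if i ∈ s then t i else univ with hu
  have hum : ∀ i, MeasurableSet (u i) := fun i => by
    simp only [hu]; split_ifs
    exacts [ht i, MeasurableSet.univ]
  have hbox : (s : Set ℕ).pi t = ((Finset.range (N + 1) : Finset ℕ) : Set ℕ).pi u := by
    ext ω
    simp only [Set.mem_pi, Finset.mem_coe, hu]
    constructor
    · intro h i _
      split_ifs with his
      exacts [h i his, mem_univ _]
    · intro h i hi
      simpa [hi] using h i (hN hi)
  have hprod : ∏ i ∈ s, ν (t i) = ∏ i ∈ Finset.range (N + 1), ν (u i) := by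
    rw [← Finset.prod_subset hN]
    · exact Finset.prod_congr rfl fun i hi => by simp [hu, hi]
    · intro i _ hi
      simp [hu, hi]
  have hboxm : MeasurableSet (((Finset.range (N + 1) : Finset ℕ) : Set ℕ).pi u) :=
    MeasurableSet.pi (Finset.countable_toSet _) fun i _ => hum i
  rw [hbox, hprod, Measure.sum_apply _ hboxm, tsum_fintype, Finset.prod_range_succ']
  have hterm : ∀ a : α, (ν {a} • P.map (seqCons a))
      (((Finset.range (N + 1) : Finset ℕ) : Set ℕ).pi u) =
      (∏ i ∈ Finset.range N, ν (u (i + 1))) * (u 0).indicator (fun a => ν {a}) a := by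
    intro a
    rw [Measure.smul_apply, Measure.map_apply (measurable_seqCons a) hboxm, smul_eq_mul]
    by_cases ha : a ∈ u 0
    · have : seqCons a ⁻¹' (((Finset.range (N + 1) : Finset ℕ) : Set ℕ).pi u) =
          ((Finset.range N : Finset ℕ) : Set ℕ).pi (fun i => u (i + 1)) := by
        ext ω
        simp only [Set.mem_preimage, Set.mem_pi, Finset.mem_coe, Finset.mem_range]
        constructor
        · intro h i hi
          exact h (i + 1) (by omega)
        · intro h i hi
          cases i with
          | zero => exact ha
          | succ i => exact h i (by omega)
      rw [this, hP, Measure.infinitePi_pi _ (fun i _ => hum _), Set.indicator_of_mem ha, mul_comm]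
    · have : seqCons a ⁻¹' (((Finset.range (N + 1) : Finset ℕ) : Set ℕ).pi u) = ∅ := by
        ext ω
        simp only [Set.mem_preimage, Set.mem_pi, Finset.mem_coe, Finset.mem_range,
          Set.mem_empty_iff_false, iff_false]
        intro h
        exact ha (h 0 (by omega))
      rw [this, Set.indicator_of_notMem ha]
      simp
  rw [Finset.sum_congr rfl fun a _ => hterm a, ← Finset.mul_sum]
  congr 1
  rw [← tsum_fintype (L := SummationFilter.unconditional _), Measure.tsum_indicator_apply_singleton ν _ (hum 0)]

/-- The measure is the law of the random series `X ω = ∑ k, ρ (ω 0) ⋯ ρ (ω (k - 1)) * τ (ω k)`,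
which satisfies `X (seqCons a ω) = ρ a * X ω + τ a`. -/
lemma exists_selfSimilar {α : Type*} [Fintype α] (ρ τ : α → ℝ) (c : ℝ) (hc : c < 1)
    (hρ : ∀ a, 0 ≤ ρ a ∧ ρ a ≤ c) (p : α → ℝ≥0∞) (hp : ∑ a, p a = 1) :
    ∃ μ : Measure ℝ, IsProbabilityMeasure μ ∧
      μ = Measure.sum (fun a => p a • μ.map (fun x => ρ a * x + τ a)) := by
  classical
  let _ : MeasurableSpace α := ⊤
  have : MeasurableSingletonClass α := ⟨fun _ => trivial⟩
  set q : PMF α := PMF.ofFintype p hp with hq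
  set P := Measure.infinitePi (fun _ : ℕ => q.toMeasure) with hP
  obtain ⟨T, hT⟩ : ∃ T, ∀ a, ‖τ a‖ ≤ T := by
    obtain ⟨T, hT⟩ := (Set.finite_range (fun a => ‖τ a‖)).bddAbove
    exact ⟨T, fun a => hT ⟨a, rfl⟩⟩
  set F : (ℕ → α) → ℕ → ℝ := fun ω k => (∏ j ∈ Finset.range k, ρ (ω j)) * τ (ω k) with hF
  have hsum : ∀ ω, Summable (F ω) := by
    intro ω
    have hc0 : 0 ≤ c := (hρ (ω 0)).1.trans (hρ (ω 0)).2
    refine Summable.of_norm_bounded (g := fun k => c ^ k * T)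
      ((summable_geometric_of_lt_one hc0 hc).mul_right T) fun k => ?_
    have h0 : 0 ≤ ∏ j ∈ Finset.range k, ρ (ω j) := Finset.prod_nonneg fun j _ => (hρ _).1
    rw [hF, norm_mul, Real.norm_of_nonneg h0]
    have h1 : ∏ j ∈ Finset.range k, ρ (ω j) ≤ c ^ k := by
      simpa using Finset.prod_le_prod (s := Finset.range k) (f := fun j => ρ (ω j))
        (g := fun _ => c) (fun j _ => (hρ _).1) (fun j _ => (hρ _).2)
    exact mul_le_mul h1 (hT _) (norm_nonneg _) (pow_nonneg hc0 k)
  set X : (ℕ → α) → ℝ := fun ω => ∑' k, F ω k with hX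
  have hXm : Measurable X := by
    refine measurable_of_tendsto_metrizable (f := fun N ω => ∑ k ∈ Finset.range N, F ω k)
      (fun N => ?_) (tendsto_pi_nhds.2 fun ω => (hsum ω).hasSum.tendsto_sum_nat)
    refine Finset.measurable_sum _ fun k _ => ?_
    refine Measurable.mul (Finset.measurable_prod _ fun j _ => ?_) ?_
    · exact (measurable_from_top (f := ρ)).comp (measurable_pi_apply j)
    · exact (measurable_from_top (f := τ)).comp (measurable_pi_apply k)
  have hXcons : ∀ a ω, X (seqCons a ω) = ρ a * X ω + τ a := by
    intro a ω
    simp only [hX]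
    rw [(hsum _).tsum_eq_zero_add, add_comm, ← tsum_mul_left]
    congr 1
    · refine tsum_congr fun k => ?_
      simp only [hF, Finset.prod_range_succ']
      simp only [seqCons]
      ring
    · simp [hF, seqCons]
  refine ⟨P.map X, Measure.isProbabilityMeasure_map hXm.aemeasurable, ?_⟩
  have hsing : ∀ a, q.toMeasure {a} = p a := fun a => by
    rw [PMF.toMeasure_apply_singleton _ _ (measurableSet_singleton a)]; rfl
  have key := infinitePi_eq_sum_map_seqCons q.toMeasure
  rw [← hP] at key
  ext A hA
  rw [Measure.map_apply hXm hA]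
  conv_lhs => rw [key]
  rw [Measure.sum_apply _ (hXm hA), Measure.sum_apply _ hA]
  refine tsum_congr fun a => ?_
  have hg : Measurable (fun x : ℝ => ρ a * x + τ a) := by fun_prop
  rw [Measure.smul_apply, Measure.smul_apply, hsing, Measure.map_apply (measurable_seqCons a) (hXm hA),
    Measure.map_apply hg hA, Measure.map_apply hXm (hg hA)]
  congr 2
  ext ω
  simp [hXcons]

/-! ### Support and decay of self-similar measures -/

lemma selfSimilar_apply {α : Type*} [Fintype α] {ρ τ : α → ℝ} {p : α → ℝ≥0∞} {μ : Measure ℝ}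
    (hμ : μ = Measure.sum (fun a => p a • μ.map (fun x => ρ a * x + τ a)))
    {A : Set ℝ} (hA : MeasurableSet A) :
    μ A = ∑ a, p a * μ ((fun x => ρ a * x + τ a) ⁻¹' A) := by
  conv_lhs => rw [hμ]
  rw [Measure.sum_apply _ hA, tsum_fintype]
  refine Finset.sum_congr rfl fun a _ => ?_
  rw [Measure.smul_apply, Measure.map_apply (by fun_prop) hA, smul_eq_mul]

/-- A self-similar measure lives on any nonempty compact set that every map sends into itself. -/
lemma selfSimilar_support {α : Type*} [Fintype α] {ρ τ : α → ℝ} {p : α → ℝ≥0∞} {μ : Measure ℝ}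
    [IsProbabilityMeasure μ]
    (hμ : μ = Measure.sum (fun a => p a • μ.map (fun x => ρ a * x + τ a)))
    (hp : ∑ a, p a = 1) {c : ℝ} (hc0 : 0 ≤ c) (hc : c < 1) (hρ : ∀ a, 0 ≤ ρ a ∧ ρ a ≤ c)
    {K : Set ℝ} (hKne : K.Nonempty) (hKc : IsCompact K)
    (hK : ∀ a, ∀ x ∈ K, ρ a * x + τ a ∈ K) : μ K = 1 := by
  have hstep : ∀ R, 0 ≤ R → μ (Metric.cthickening R K) ≤ μ (Metric.cthickening (c * R) K) := by
    intro R hR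
    rw [selfSimilar_apply hμ (A := Metric.cthickening (c * R) K)
      Metric.isClosed_cthickening.measurableSet]
    calc μ (Metric.cthickening R K) = ∑ a, p a * μ (Metric.cthickening R K) := by
          rw [← Finset.sum_mul, hp, one_mul]
      _ ≤ _ := by
          refine Finset.sum_le_sum fun a _ => ?_
          gcongr
          intro x hx
          rw [hKc.cthickening_eq_biUnion_closedBall hR] at hx
          simp only [mem_iUnion, exists_prop, Metric.mem_closedBall, Real.dist_eq] at hx
          obtain ⟨y, hy, hxy⟩ := hx
          refine Metric.mem_cthickening_of_dist_le _ _ _ _ (hK a y hy) ?_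
          rw [Real.dist_eq, show ρ a * x + τ a - (ρ a * y + τ a) = ρ a * (x - y) by ring, abs_mul,
            abs_of_nonneg (hρ a).1]
          exact mul_le_mul (hρ a).2 hxy (abs_nonneg _) hc0
  have hiter : ∀ R, 0 ≤ R → ∀ k : ℕ,
      μ (Metric.cthickening R K) ≤ μ (Metric.cthickening (c ^ k * R) K) := by
    intro R hR k
    induction k with
    | zero => simp
    | succ k ih =>
      refine ih.trans ((hstep _ (by positivity)).trans_eq ?_)
      rw [pow_succ']; ring_nf
  have hle : ∀ R, 0 ≤ R → μ (Metric.cthickening R K) ≤ μ K := by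
    intro R hR
    have h1 : Tendsto (fun k : ℕ => c ^ k * R) atTop (𝓝 0) := by
      simpa using (tendsto_pow_atTop_nhds_zero_of_lt_one hc0 hc).mul_const R
    exact ge_of_tendsto' ((tendsto_measure_cthickening_of_isCompact (μ := μ) hKc).comp h1)
      (hiter R hR)
  refine le_antisymm prob_le_one ?_
  have hU : (⋃ N : ℕ, Metric.cthickening (N : ℝ) K) = univ := by
    refine eq_univ_of_forall fun x => ?_
    obtain ⟨y, hy⟩ := hKne
    obtain ⟨N, hN⟩ := exists_nat_ge (dist x y)
    exact mem_iUnion.2 ⟨N, Metric.mem_cthickening_of_dist_le _ y _ _ hy hN⟩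
  have hmono : Monotone fun N : ℕ => Metric.cthickening (N : ℝ) K := fun i j hij =>
    Metric.cthickening_mono (by exact_mod_cast hij) _
  have ht := tendsto_measure_iUnion_atTop (μ := μ) hmono
  rw [hU, measure_univ] at ht
  exact le_of_tendsto' ht fun N => hle N (Nat.cast_nonneg N)

/-- Uniform decay of the mass of balls. At each step, the preimage of a ball of radius `κ ^ (k + 1)`
under any map lies in a ball of radius `κ ^ k`; it charges `K` for at most one map of the separated
family `S`, of weight about `q`, while all the maps share a further weight `q` in total. -/
lemma selfSimilar_decay {α : Type*} [Fintype α] {ρ τ : α → ℝ} {p : α → ℝ≥0∞} {μ : Measure ℝ}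
    [IsProbabilityMeasure μ]
    (hμ : μ = Measure.sum (fun a => p a • μ.map (fun x => ρ a * x + τ a)))
    {K : Set ℝ} (hKm : MeasurableSet K) (hμK : μ K = 1) {x₀ D L κ : ℝ}
    (hx₀ : ∀ y ∈ K, |y - x₀| ≤ D) (hκ : 0 < κ) (hκ1 : κ ≤ 1) (hκL : κ ≤ L)
    (hρ : ∀ a, κ ≤ ρ a ∧ ρ a ≤ L) (S : Finset α)
    (hS : ∀ a ∈ S, ∀ b ∈ S, |(ρ a * x₀ + τ a) - (ρ b * x₀ + τ b)| ≤ 2 * (1 + D) * L → a = b)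
    {q : ℝ≥0∞} (hpS : ∀ a, p a ≤ (S : Set α).indicator (fun _ => q) a + q / Fintype.card α)
    (k : ℕ) (x : ℝ) : μ (Metric.closedBall x (κ ^ k)) ≤ (2 * q) ^ k := by
  induction k generalizing x with
  | zero => simpa using prob_le_one
  | succ k ih =>
    have hk1 : κ ^ k ≤ 1 := pow_le_one₀ hκ.le hκ1
    set B := Metric.closedBall x (κ ^ (k + 1)) with hB
    have hpre : ∀ a, μ ((fun x => ρ a * x + τ a) ⁻¹' B) ≤ (2 * q) ^ k := by
      intro a
      have ha : 0 < ρ a := hκ.trans_le (hρ a).1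
      refine le_trans (measure_mono ?_) (ih ((x - τ a) / ρ a))
      intro y hy
      simp only [hB, mem_preimage, Metric.mem_closedBall, Real.dist_eq] at hy ⊢
      have h1 : y - (x - τ a) / ρ a = (ρ a * y + τ a - x) / ρ a := by
        field_simp; ring
      rw [h1, abs_div, abs_of_pos ha, div_le_iff₀ ha]
      refine hy.trans ?_
      rw [pow_succ]
      exact mul_le_mul_of_nonneg_left (hρ a).1 (by positivity)
    have hnear : ∀ a, μ ((fun x => ρ a * x + τ a) ⁻¹' B) ≠ 0 →
        |(ρ a * x₀ + τ a) - x| ≤ (1 + D) * L := by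
      intro a h
      have ha : 0 < ρ a := hκ.trans_le (hρ a).1
      have hne : ((fun x => ρ a * x + τ a) ⁻¹' B ∩ K).Nonempty := by
        by_contra hemp
        rw [Set.not_nonempty_iff_eq_empty] at hemp
        refine h (measure_mono_null (t := Kᶜ) ?_ ((prob_compl_eq_zero_iff hKm).2 hμK))
        intro y hy hyK
        exact (Set.ext_iff.1 hemp y).1 ⟨hy, hyK⟩
      obtain ⟨y, hyB, hyK⟩ := hne
      simp only [hB, mem_preimage, Metric.mem_closedBall, Real.dist_eq] at hyB
      have h2 : |(ρ a * y + τ a) - (ρ a * x₀ + τ a)| ≤ D * L := by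
        rw [show (ρ a * y + τ a) - (ρ a * x₀ + τ a) = (y - x₀) * ρ a by ring, abs_mul,
          abs_of_pos ha]
        have := hx₀ y hyK
        exact mul_le_mul this (hρ a).2 ha.le ((abs_nonneg _).trans this)
      have h3 : κ ^ (k + 1) ≤ L := by
        rw [pow_succ]
        exact (mul_le_of_le_one_left hκ.le hk1).trans hκL
      rw [abs_le] at hyB h2 ⊢
      constructor <;> linarith [hyB.1, hyB.2, h2.1, h2.2]
    have hSsum : ∑ a ∈ S, μ ((fun x => ρ a * x + τ a) ⁻¹' B) ≤ (2 * q) ^ k := by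
      by_cases hex : ∃ a ∈ S, μ ((fun x => ρ a * x + τ a) ⁻¹' B) ≠ 0
      · obtain ⟨a, haS, ha⟩ := hex
        rw [Finset.sum_eq_single_of_mem a haS]
        · exact hpre a
        · intro b hbS hba
          by_contra hb
          refine hba (hS b hbS a haS ?_)
          have h1 := hnear a ha
          have h2 := hnear b hb
          rw [abs_le] at h1 h2 ⊢
          constructor <;> linarith [h1.1, h1.2, h2.1, h2.2]
      · push Not at hex
        rw [Finset.sum_eq_zero hex]
        exact zero_le
    rw [selfSimilar_apply hμ Metric.isClosed_closedBall.measurableSet]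
    calc ∑ a, p a * μ ((fun x => ρ a * x + τ a) ⁻¹' B)
        ≤ ∑ a, ((S : Set α).indicator (fun _ => q) a + q / Fintype.card α) *
            μ ((fun x => ρ a * x + τ a) ⁻¹' B) := by
          gcongr with a _
          exact hpS a
      _ = q * ∑ a ∈ S, μ ((fun x => ρ a * x + τ a) ⁻¹' B) +
            ∑ a, q / Fintype.card α * μ ((fun x => ρ a * x + τ a) ⁻¹' B) := by
          classical
          simp_rw [add_mul]
          rw [Finset.sum_add_distrib, Finset.mul_sum]
          congr 1
          simp [Set.indicator_apply, ite_mul, Finset.sum_ite_mem]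
      _ ≤ q * (2 * q) ^ k + ∑ a : α, q / Fintype.card α * (2 * q) ^ k := by
          gcongr with a _
          exact hpre a
      _ ≤ q * (2 * q) ^ k + q * (2 * q) ^ k := by
          gcongr
          rw [Finset.sum_const, Finset.card_univ, nsmul_eq_mul, ← mul_assoc]
          gcongr
          exact ENNReal.mul_div_le
      _ = (2 * q) ^ (k + 1) := by ring

/-- The mass distribution principle, for a bound known along a geometric sequence of radii only. -/
lemma le_dimH_of_decay {μ : Measure ℝ} {κ : ℝ} (hκ : 0 < κ) (hκ1 : κ < 1) {d : NNReal}
    (hd : 0 < d)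
    (h : ∀ (k : ℕ) (x : ℝ), μ (Metric.closedBall x (κ ^ k)) ≤ ENNReal.ofReal ((κ ^ k) ^ (d : ℝ)))
    {X : Set ℝ} (hX : 0 < μ X) : (d : ℝ≥0∞) ≤ dimH X := by
  have hd' : (0 : ℝ) < d := by exact_mod_cast hd
  set C : ℝ := κ ^ (d : ℝ) with hC
  have hC0 : 0 < C := Real.rpow_pos_of_pos hκ _
  have hle : (ENNReal.ofReal C) • μ ≤ Measure.hausdorffMeasure (d : ℝ) := by
    refine Measure.le_hausdorffMeasure (d : ℝ) _ 1 one_pos fun s hs => ?_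
    rw [Measure.smul_apply, smul_eq_mul]
    rcases s.eq_empty_or_nonempty with rfl | ⟨x, hx⟩
    · simp
    have hfin : Metric.ediam s ≠ ∞ := (hs.trans_lt ENNReal.one_lt_top).ne
    set δ := (Metric.ediam s).toReal with hδ
    have hsub : ∀ R, δ ≤ R → s ⊆ Metric.closedBall x R := by
      intro R hR y hy
      rw [Metric.mem_closedBall]
      exact (Metric.dist_le_diam_of_mem' hfin hy hx).trans hR
    have hδ0 : 0 ≤ δ := ENNReal.toReal_nonneg
    rcases hδ0.eq_or_lt with h0 | hpos
    · have hz : μ s = 0 := by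
        have ht : Tendsto (fun k : ℕ => ENNReal.ofReal ((κ ^ k) ^ (d : ℝ))) atTop (𝓝 0) := by
          rw [← ENNReal.ofReal_zero]
          refine ENNReal.tendsto_ofReal ?_
          have := (tendsto_pow_atTop_nhds_zero_of_lt_one hκ.le hκ1).rpow_const
            (p := (d : ℝ)) (Or.inr hd'.le)
          rwa [Real.zero_rpow hd'.ne'] at this
        refine le_antisymm (ge_of_tendsto' ht fun k => ?_) zero_le
        exact (measure_mono (hsub _ (by rw [← h0]; positivity))).trans (h k x)
      simp [hz]
    · have hδ1 : δ ≤ 1 := by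
        have := ENNReal.toReal_mono ENNReal.one_ne_top hs
        simpa using this
      obtain ⟨k, hk1, hk2⟩ := exists_nat_pow_near_of_lt_one hpos hδ1 hκ hκ1
      calc ENNReal.ofReal C * μ s
          ≤ ENNReal.ofReal C * ENNReal.ofReal ((κ ^ k) ^ (d : ℝ)) := by
            gcongr
            exact (measure_mono (hsub _ hk2)).trans (h k x)
        _ = ENNReal.ofReal ((κ ^ (k + 1)) ^ (d : ℝ)) := by
            rw [← ENNReal.ofReal_mul hC0.le, hC, ← Real.mul_rpow hκ.le (by positivity), pow_succ']
        _ ≤ ENNReal.ofReal (δ ^ (d : ℝ)) := by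
            apply ENNReal.ofReal_le_ofReal
            exact Real.rpow_le_rpow (by positivity) hk1.le hd'.le
        _ = Metric.ediam s ^ (d : ℝ) := by
            rw [← ENNReal.ofReal_rpow_of_pos hpos, hδ, ENNReal.ofReal_toReal hfin]
  refine le_dimH_of_hausdorffMeasure_ne_zero fun h0 => ?_
  have h1 := hle X
  rw [h0, Measure.smul_apply, smul_eq_mul] at h1
  have : 0 < ENNReal.ofReal C * μ X :=
    ENNReal.mul_pos (by simpa using hC0) hX.ne'
  exact absurd h1 (not_le.2 this)

/-! ### Separated families, coverings and weights -/

lemma exists_maximal_separated {α : Type*} [Fintype α] (z : α → ℝ) {δ : ℝ} (hδ : 0 ≤ δ) :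
    ∃ S : Finset α, (∀ a ∈ S, ∀ b ∈ S, |z a - z b| ≤ δ → a = b) ∧
      ∀ a, ∃ b ∈ S, |z a - z b| ≤ δ := by
  classical
  obtain ⟨S, hS⟩ := (Set.toFinite {S : Finset α | ∀ a ∈ S, ∀ b ∈ S, |z a - z b| ≤ δ → a = b}
    ).exists_maximal ⟨∅, by simp⟩
  refine ⟨S, hS.prop, fun a => ?_⟩
  by_contra! hcon
  have haS : a ∉ S := fun ha => by
    have := hcon a ha
    simp at this
    linarith
  have hins : insert a S ∈ {S : Finset α | ∀ a ∈ S, ∀ b ∈ S, |z a - z b| ≤ δ → a = b} := by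
    intro x hx y hy hxy
    rw [Finset.mem_insert] at hx hy
    rcases hx with rfl | hx <;> rcases hy with rfl | hy
    · rfl
    · exact absurd hxy (not_le.2 (hcon y hy))
    · rw [abs_sub_comm] at hxy
      exact absurd hxy (not_le.2 (hcon x hx))
    · exact hS.prop x hx y hy hxy
  exact haS (hS.le_of_ge hins (Finset.subset_insert a S) (Finset.mem_insert_self a S))

/-- If `K` is covered by `O(m ^ d)` intervals of length `O(1 / m)` for every `m`, then its
`d`-dimensional Hausdorff measure is finite. -/
lemma dimH_le_of_covers {K : Set ℝ} {d : NNReal} {A C : ℝ} {ι : ℕ → Type*} [∀ m, Fintype (ι m)]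
    (z : ∀ m, ι m → ℝ) (hA : 0 ≤ A)
    (hcov : ∀ m : ℕ, 1 ≤ m → K ⊆ ⋃ i, Metric.closedBall (z m i) (A / m))
    (hcard : ∀ m : ℕ, 1 ≤ m → (Fintype.card (ι m) : ℝ) ≤ C * (m : ℝ) ^ (d : ℝ)) :
    dimH K ≤ d := by
  have hd : (0 : ℝ) ≤ d := d.2
  have hdiam : ∀ m i, Metric.ediam (Metric.closedBall (z m i) (A / m)) =
      ENNReal.ofReal (2 * A / m) := by
    intro m i
    rw [Real.closedBall_eq_Icc, Real.ediam_Icc]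
    congr 1
    ring
  have hlim : Tendsto (fun m : ℕ => ENNReal.ofReal (2 * A / m)) atTop (𝓝 0) := by
    rw [← ENNReal.ofReal_zero]
    exact ENNReal.tendsto_ofReal (tendsto_const_div_atTop_nhds_zero_nat _)
  have hev : ∀ᶠ m : ℕ in atTop, 1 ≤ m := eventually_ge_atTop 1
  have hH := Measure.hausdorffMeasure_le_liminf_sum (d : ℝ) K _ hlim
    (fun m i => Metric.closedBall (z m i) (A / m))
    (Eventually.of_forall fun m i => (hdiam m i).le) (hev.mono hcov)
  have hbd : ∀ m : ℕ, 1 ≤ m →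
      ∑ i, Metric.ediam (Metric.closedBall (z m i) (A / m)) ^ (d : ℝ) ≤
        ENNReal.ofReal (C * (2 * A) ^ (d : ℝ)) := by
    intro m hm
    have hm0 : (0 : ℝ) < m := by exact_mod_cast hm
    simp only [hdiam]
    rw [Finset.sum_const, Finset.card_univ, nsmul_eq_mul,
      ENNReal.ofReal_rpow_of_nonneg (by positivity) hd, ← ENNReal.ofReal_natCast,
      ← ENNReal.ofReal_mul (by positivity)]
    apply ENNReal.ofReal_le_ofReal
    calc (Fintype.card (ι m) : ℝ) * (2 * A / m) ^ (d : ℝ)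
        ≤ (C * (m : ℝ) ^ (d : ℝ)) * (2 * A / m) ^ (d : ℝ) := by
          gcongr
          exact hcard m hm
      _ = C * (2 * A) ^ (d : ℝ) := by
          rw [mul_assoc, ← Real.mul_rpow hm0.le (by positivity), mul_div_cancel₀ _ hm0.ne']
  have hle : Measure.hausdorffMeasure (d : ℝ) K ≤ ENNReal.ofReal (C * (2 * A) ^ (d : ℝ)) := by
    refine hH.trans ((liminf_le_liminf (hev.mono hbd)).trans_eq ?_)
    rw [liminf_const]
  exact dimH_le_of_hausdorffMeasure_ne_top (hle.trans_lt ENNReal.ofReal_lt_top).ne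

/-- A strictly positive probability vector in which the words of `S` have weight at most
`1 / #S` each, up to a further total weight `1 / #S` shared equally by all words:
the mixture `(1 - 1 / #S) • uniform on S + (1 / #S) • uniform on α`. -/
lemma exists_weights {α : Type*} [Fintype α] {S : Finset α} (hS : S.Nonempty) :
    ∃ p : α → ℝ≥0∞, (∀ a, 0 < p a) ∧ ∑ a, p a = 1 ∧
      ∀ a, p a ≤ (S : Set α).indicator (fun _ => ENNReal.ofReal (1 / S.card)) a +
        ENNReal.ofReal (1 / S.card) / Fintype.card α := by
  classical
  have hs1 : (1 : ℝ) ≤ S.card := by exact_mod_cast hS.card_pos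
  have hN : (0 : ℝ) < Fintype.card α := by
    have : Nonempty α := ⟨hS.choose⟩
    exact_mod_cast Fintype.card_pos
  set s : ℝ := (S.card : ℝ)
  set N : ℝ := (Fintype.card α : ℝ)
  have hs0 : 0 < s := by linarith
  have h1s : 0 ≤ 1 - 1 / s := by
    rw [sub_nonneg, div_le_one hs0]; exact hs1
  set P : α → ℝ := fun a => (if a ∈ S then (1 - 1 / s) / s else 0) + 1 / s / N with hP
  have hP0 : ∀ a, 0 < P a := by
    intro a
    have h2 : 0 < 1 / s / N := by positivity
    simp only [hP]
    split_ifs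
    · have : 0 ≤ (1 - 1 / s) / s := div_nonneg h1s hs0.le
      linarith
    · linarith
  refine ⟨fun a => ENNReal.ofReal (P a), fun a => ENNReal.ofReal_pos.2 (hP0 a), ?_, fun a => ?_⟩
  · rw [← ENNReal.ofReal_sum_of_nonneg fun a _ => (hP0 a).le]
    have : ∑ a, P a = 1 := by
      simp only [hP, Finset.sum_add_distrib, Finset.sum_ite_mem, Finset.univ_inter,
        Finset.sum_const, Finset.card_univ, nsmul_eq_mul]
      change s * ((1 - 1 / s) / s) + N * (1 / s / N) = 1
      field_simp
      ring
    rw [this, ENNReal.ofReal_one]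
  · have e1 : ENNReal.ofReal (1 / s) / Fintype.card α = ENNReal.ofReal (1 / s / N) := by
      rw [ENNReal.ofReal_div_of_pos hN, ENNReal.ofReal_natCast]
    rw [e1]
    simp only [hP, Set.indicator_apply, Finset.mem_coe]
    refine ENNReal.ofReal_add_le.trans ?_
    gcongr
    split_ifs
    · apply ENNReal.ofReal_le_ofReal
      gcongr
      have : 0 ≤ 1 / s := by positivity
      linarith
    · simp

/-! ### Words of the induced systems -/

lemma compList_append {ι : Type*} (f : ι → ℝ → ℝ) (u v : List ι) :
    compList f (u ++ v) = compList f u ∘ compList f v := by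
  induction u with
  | nil => rfl
  | cons i u ih => simp only [List.cons_append, compList, ih, Function.comp_assoc]

lemma compList_affine {n : ℕ} {r t : Fin n → ℝ} {f : Fin n → ℝ → ℝ}
    (hf : ∀ i x, f i x = r i * x + t i) (w : List (Fin n)) :
    compList f w = fun x => ratioProd r w * x + compList f w 0 := by
  induction w with
  | nil => funext x; simp [compList, ratioProd]
  | cons i w ih =>
    funext x
    have h1 : compList f w x = ratioProd r w * x + compList f w 0 := congrFun ih x
    have h2 : ratioProd r (i :: w) = r i * ratioProd r w := by simp [ratioProd]
    simp only [compList, Function.comp_apply, hf, h2]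
    rw [h1]
    ring

lemma compList_mem {ι : Type*} {f : ι → ℝ → ℝ} {K : Set ℝ} (hK : ∀ i, ∀ x ∈ K, f i x ∈ K)
    (w : List ι) {x : ℝ} (hx : x ∈ K) : compList f w x ∈ K := by
  induction w with
  | nil => exact hx
  | cons i w ih => exact hK i _ ih

lemma ratioProd_append_singleton {n : ℕ} (r : Fin n → ℝ) (u : List (Fin n)) (i : Fin n) :
    ratioProd r (u ++ [i]) = ratioProd r u * r i := by
  simp [ratioProd]

lemma ratioProd_pos {n : ℕ} {r : Fin n → ℝ} (hr : ∀ i, 0 < r i) (w : List (Fin n)) :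
    0 < ratioProd r w := by
  refine List.prod_pos fun x hx => ?_
  obtain ⟨i, _, rfl⟩ := List.mem_map.1 hx
  exact hr i

lemma ratioProd_le_pow {n : ℕ} {r : Fin n → ℝ} {c : ℝ} (hc0 : 0 ≤ c)
    (hr : ∀ i, 0 < r i ∧ r i ≤ c) (w : List (Fin n)) : ratioProd r w ≤ c ^ w.length := by
  induction w with
  | nil => simp [ratioProd]
  | cons i w ih =>
    have h2 : ratioProd r (i :: w) = r i * ratioProd r w := by simp [ratioProd]
    rw [h2, List.length_cons, pow_succ']
    exact mul_le_mul (hr i).2 ih (ratioProd_pos (fun i => (hr i).1) w).le hc0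

/-- Deleting the last letter leaves a ratio at least `1 / m`, which bounds the length. -/
lemma Phim_finite {n : ℕ} {r : Fin n → ℝ} {c : ℝ} (hc0 : 0 ≤ c) (hc : c < 1)
    (hr : ∀ i, 0 < r i ∧ r i ≤ c) {m : ℕ} (hm : 1 ≤ m) : (Phim r m).Finite := by
  have hm0 : (0 : ℝ) < 1 / m := by
    have : (0 : ℝ) < m := by exact_mod_cast hm
    positivity
  obtain ⟨N, hN⟩ := exists_pow_lt_of_lt_one hm0 hc
  refine (List.finite_length_le (Fin n) N).subset fun w hw => ?_
  by_contra hlen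
  have h1 := hw.2.2.trans (ratioProd_le_pow hc0 hr w.dropLast)
  simp only [Set.mem_ofPred_eq, not_le] at hlen
  have h2 : c ^ w.dropLast.length ≤ c ^ N :=
    pow_le_pow_of_le_one hc0 hc.le (by rw [List.length_dropLast]; omega)
  linarith

/-- `Φ_m` still generates `K`, that is, `K` is the union of its images under the words of `Φ_m`:
extend a coding of `x` letter by letter until the ratio first drops below `1 / m`. -/
lemma exists_mem_Phim {n : ℕ} {r : Fin n → ℝ} {f : Fin n → ℝ → ℝ} {c : ℝ} (hc0 : 0 ≤ c)
    (hc : c < 1) (hr : ∀ i, 0 < r i ∧ r i ≤ c) {m : ℕ} (hm : 1 ≤ m) {K : Set ℝ}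
    (hK : K = ⋃ i, f i '' K) {x : ℝ} (hx : x ∈ K) :
    ∃ w ∈ Phim r m, ∃ y ∈ K, compList f w y = x := by
  have hm1 : (1 : ℝ) ≤ m := by exact_mod_cast hm
  have hm0 : (0 : ℝ) < 1 / m := by positivity
  have key : ∀ k : ℕ, (∃ w ∈ Phim r m, ∃ y ∈ K, compList f w y = x) ∨
      ∃ u : List (Fin n), u.length = k ∧ 1 / (m : ℝ) ≤ ratioProd r u ∧
        ∃ y ∈ K, compList f u y = x := by
    intro k
    induction k with
    | zero =>
      refine Or.inr ⟨[], rfl, ?_, x, hx, rfl⟩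
      simpa [ratioProd] using inv_le_one_of_one_le₀ hm1
    | succ k ih =>
      rcases ih with h | ⟨u, hlen, hu, y, hy, hyx⟩
      · exact Or.inl h
      · rw [hK] at hy
        obtain ⟨i, z, hz, hzy⟩ := mem_iUnion.1 hy
        have hcomp : compList f (u ++ [i]) z = x := by
          rw [compList_append]
          simp only [compList, Function.comp_apply, id_eq]
          rw [hzy, hyx]
        by_cases hlt : ratioProd r (u ++ [i]) < 1 / m
        · exact Or.inl ⟨u ++ [i], ⟨by simp, hlt, by simpa using hu⟩, z, hz, hcomp⟩
        · exact Or.inr ⟨u ++ [i], by simp [hlen], not_lt.1 hlt, z, hz, hcomp⟩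
  obtain ⟨N, hN⟩ := exists_pow_lt_of_lt_one hm0 hc
  rcases key N with h | ⟨u, hlen, hu, _⟩
  · exact h
  · have := ratioProd_le_pow hc0 hr u
    rw [hlen] at this
    linarith

lemma Phim_ratio {n : ℕ} {r : Fin n → ℝ} {c e : ℝ} (hc0 : 0 ≤ c) (hc : c < 1)
    (hr : ∀ i, 0 < r i ∧ r i ≤ c) (he0 : 0 ≤ e) (he : ∀ i, e ≤ r i) {m : ℕ}
    {w : List (Fin n)} (hw : w ∈ Phim r m) :
    0 < ratioProd r w ∧ ratioProd r w ≤ c ∧ ratioProd r w ≤ 1 / m ∧ e / m ≤ ratioProd r w := by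
  refine ⟨ratioProd_pos (fun i => (hr i).1) w, ?_, hw.2.1.le, ?_⟩
  · refine (ratioProd_le_pow hc0 hr w).trans ?_
    have : w.length ≠ 0 := by simpa using hw.1
    exact pow_le_of_le_one hc0 hc.le this
  · have h1 := ratioProd_append_singleton r w.dropLast (w.getLast hw.1)
    rw [List.dropLast_append_getLast] at h1
    rw [h1]
    calc e / m = 1 / m * e := by ring
      _ ≤ _ := mul_le_mul hw.2.2 (he _) he0 (ratioProd_pos (fun i => (hr i).1) _).le

/-! ### The dimension formula -/

theorem stmt18 {n : ℕ} (hn : 2 ≤ n) (r t : Fin n → ℝ) (f : Fin n → ℝ → ℝ)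
    (hf : ∀ i x, f i x = r i * x + t i)
    (hr : ∀ i, 0 < r i ∧ r i < 1)
    (a b : ℝ) (hab : a < b)
    (hmaps : ∀ i, MapsTo (f i) (Icc a b) (Icc a b))
    (hfix : ∃ i j : Fin n, ∃ y ∈ Icc a b, ∃ z ∈ Icc a b, f i y = y ∧ f j z = z ∧ y ≠ z)
    (K : Set ℝ) (hKne : K.Nonempty) (hKc : IsCompact K) (hKinv : K = ⋃ i, f i '' K) :
    dimH K = sSup {d : ℝ≥0∞ | ∃ m : ℕ, 1 ≤ m ∧ ∃ μ : Measure ℝ,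
      IsProbabilityMeasure μ ∧
      (∃ p : List (Fin n) → ℝ≥0∞, (∀ w ∈ Phim r m, 0 < p w) ∧
        (∑' w : {w : List (Fin n) // w ∈ Phim r m}, p w.1) = 1 ∧
        μ = Measure.sum
          (fun w : {w : List (Fin n) // w ∈ Phim r m} => p w.1 • μ.map (compList f w.1))) ∧
      d = dimOf μ} := by
  classical
  have hne : Nonempty (Fin n) := ⟨⟨0, by omega⟩⟩
  obtain ⟨c, hc0, hc, hrc⟩ : ∃ c : ℝ, 0 ≤ c ∧ c < 1 ∧ ∀ i, 0 < r i ∧ r i ≤ c := by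
    obtain ⟨i, hi⟩ := Finite.exists_max r
    exact ⟨r i, (hr i).1.le, (hr i).2, fun j => ⟨(hr j).1, hi j⟩⟩
  obtain ⟨e, he0, he1, he⟩ : ∃ e : ℝ, 0 < e ∧ e < 1 ∧ ∀ i, e ≤ r i := by
    obtain ⟨i, hi⟩ := Finite.exists_min r
    exact ⟨r i, (hr i).1, (hr i).2, hi⟩
  have hKf : ∀ i, ∀ x ∈ K, f i x ∈ K := by
    intro i x hx
    rw [hKinv]
    exact mem_iUnion.2 ⟨i, x, hx, rfl⟩
  have hKw : ∀ w : List (Fin n), ∀ x ∈ K, ratioProd r w * x + compList f w 0 ∈ K := by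
    intro w x hx
    have := compList_mem hKf w hx
    rwa [compList_affine hf w] at this
  have hfin : ∀ m : ℕ, 1 ≤ m → Fintype {w : List (Fin n) // w ∈ Phim r m} := fun m hm =>
    (Phim_finite hc0 hc hrc hm).fintype
  apply le_antisymm
  · refine le_of_forall_lt fun d' hd' => ?_
    obtain ⟨d, hd1, hd2⟩ := ENNReal.lt_iff_exists_nnreal_btwn.1 hd'
    refine hd1.trans_le ?_
    have hdpos : 0 < d := by
      have : (0 : ℝ≥0∞) < d := zero_le.trans_lt hd1
      exact_mod_cast this
    obtain ⟨x₀, hx₀⟩ := hKne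
    obtain ⟨D, hD⟩ : ∃ D : ℝ, ∀ y ∈ K, |y - x₀| ≤ D := by
      obtain ⟨D, hD⟩ := hKc.isBounded.subset_closedBall x₀
      exact ⟨D, fun y hy => by simpa [Real.dist_eq] using hD hy⟩
    have hD0 : 0 ≤ D := (abs_nonneg _).trans (hD x₀ hx₀)
    -- `S` is defined for all `m` so that it can be chosen as a function; only `1 ≤ m` matters.
    have hsep : ∀ m : ℕ, ∃ S : Finset {w : List (Fin n) // w ∈ Phim r m}, 1 ≤ m →
        (∀ u ∈ S, ∀ v ∈ S, |compList f u.1 x₀ - compList f v.1 x₀| ≤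
          2 * (1 + D) * (1 / m) → u = v) ∧
        ∀ u : {w : List (Fin n) // w ∈ Phim r m}, ∃ v ∈ S,
          |compList f u.1 x₀ - compList f v.1 x₀| ≤ 2 * (1 + D) * (1 / m) := by
      intro m
      by_cases hm : 1 ≤ m
      · have := hfin m hm
        obtain ⟨S, h1, h2⟩ := exists_maximal_separated
          (fun u : {w : List (Fin n) // w ∈ Phim r m} => compList f u.1 x₀)
          (δ := 2 * (1 + D) * (1 / m)) (by positivity)
        exact ⟨S, fun _ => ⟨h1, h2⟩⟩
      · exact ⟨∅, fun h => absurd h hm⟩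
    choose S hS using hsep
    have hcov : ∀ m : ℕ, 1 ≤ m → K ⊆ ⋃ i : S m,
        Metric.closedBall (compList f i.1.1 x₀) ((2 * (1 + D) + D) / m) := by
      intro m hm x hx
      obtain ⟨w, hw, y, hy, hyx⟩ := exists_mem_Phim hc0 hc hrc hm hKinv hx
      obtain ⟨v, hv, hwv⟩ := (hS m hm).2 ⟨w, hw⟩
      refine mem_iUnion.2 ⟨⟨v, hv⟩, ?_⟩
      rw [Metric.mem_closedBall, Real.dist_eq]
      have hρ := Phim_ratio hc0 hc hrc he0.le he hw
      have h1 : |x - compList f w x₀| ≤ D * (1 / m) := by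
        rw [← hyx, compList_affine hf w, show ratioProd r w * y + compList f w 0 -
          (ratioProd r w * x₀ + compList f w 0) = (y - x₀) * ratioProd r w by ring, abs_mul,
          abs_of_pos hρ.1]
        exact mul_le_mul (hD y hy) hρ.2.2.1 hρ.1.le hD0
      calc |x - compList f v.1 x₀|
          ≤ |x - compList f w x₀| + |compList f w x₀ - compList f v.1 x₀| := abs_sub_le _ _ _
        _ ≤ D * (1 / m) + 2 * (1 + D) * (1 / m) := add_le_add h1 hwv
        _ = (2 * (1 + D) + D) / m := by ring
    -- The constant `2 / e ^ d` makes the decay factor `2 / #(S m)` at most `(e / m) ^ d`.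
    obtain ⟨m, hm, hbig⟩ : ∃ m : ℕ, 1 ≤ m ∧
        2 / e ^ (d : ℝ) * (m : ℝ) ^ (d : ℝ) < ((S m).card : ℝ) := by
      by_contra! hcon
      refine absurd hd2 (not_lt.2 ?_)
      refine dimH_le_of_covers (A := 2 * (1 + D) + D) (C := 2 / e ^ (d : ℝ))
        (ι := fun m => S m) (fun m i => compList f i.1.1 x₀) (by positivity) hcov ?_
      intro m hm
      simpa using hcon m hm
    have hm1 : (1 : ℝ) ≤ m := by exact_mod_cast hm
    have hm0 : (0 : ℝ) < m := by linarith
    have hs0 : (0 : ℝ) < (S m).card := lt_of_le_of_lt (by positivity) hbig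
    have hSne : (S m).Nonempty := by
      rw [← Finset.card_pos]; exact_mod_cast hs0
    have := hfin m hm
    obtain ⟨p, hp0, hp1, hpS⟩ := exists_weights hSne
    obtain ⟨μ, hμP, hμ⟩ := exists_selfSimilar
      (fun w : {w : List (Fin n) // w ∈ Phim r m} => ratioProd r w.1)
      (fun w => compList f w.1 0) c hc
      (fun w => ⟨(Phim_ratio hc0 hc hrc he0.le he w.2).1.le,
        (Phim_ratio hc0 hc hrc he0.le he w.2).2.1⟩) p hp1
    have hμK : μ K = 1 := selfSimilar_support hμ hp1 hc0 hc
      (fun w => ⟨(Phim_ratio hc0 hc hrc he0.le he w.2).1.le,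
        (Phim_ratio hc0 hc hrc he0.le he w.2).2.1⟩) ⟨x₀, hx₀⟩ hKc (fun w => hKw w.1)
    have hκ0 : 0 < e / m := by positivity
    have hκL : e / m ≤ 1 / m := by gcongr
    have hκ1 : e / m < 1 := by
      rw [div_lt_one hm0]; linarith
    -- The separation constant `2 * (1 + D)` of `S m` is what this step needs: the images of `K` under
    -- two words charged by one ball have base points within `2 * (1 + D) / m`.
    have hdecay := selfSimilar_decay hμ hKc.isClosed.measurableSet hμK hD hκ0 hκ1.le hκL
      (fun w => ⟨(Phim_ratio hc0 hc hrc he0.le he w.2).2.2.2,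
        (Phim_ratio hc0 hc hrc he0.le he w.2).2.2.1⟩) (S m)
      (fun u hu v hv huv => (hS m hm).1 u hu v hv (by
        rwa [compList_affine hf u.1, compList_affine hf v.1])) hpS
    have hq : 2 * ENNReal.ofReal (1 / (S m).card) ≤ ENNReal.ofReal ((e / m) ^ (d : ℝ)) := by
      rw [show (2 : ℝ≥0∞) = ENNReal.ofReal 2 by simp, ← ENNReal.ofReal_mul (by norm_num)]
      apply ENNReal.ofReal_le_ofReal
      have hed : 0 < e ^ (d : ℝ) := Real.rpow_pos_of_pos he0 _
      have hmd : 0 < (m : ℝ) ^ (d : ℝ) := Real.rpow_pos_of_pos hm0 _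
      rw [Real.div_rpow he0.le hm0.le, mul_one_div, div_le_div_iff₀ hs0 hmd]
      have := hbig.le
      rw [div_mul_eq_mul_div, div_le_iff₀ hed] at this
      linarith
    have hdim : (d : ℝ≥0∞) ≤ dimOf μ := by
      refine le_iInf fun X => le_iInf fun _ => le_iInf fun hX => ?_
      refine le_dimH_of_decay hκ0 hκ1 hdpos (fun k x => (hdecay k x).trans ?_) hX
      refine (pow_le_pow_left₀ zero_le hq k).trans_eq ?_
      rw [← ENNReal.ofReal_pow (by positivity)]
      congr 1
      rw [← Real.rpow_natCast, ← Real.rpow_natCast, ← Real.rpow_mul hκ0.le, ← Real.rpow_mul hκ0.le,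
        mul_comm]
    refine hdim.trans (le_sSup ⟨m, hm, μ, hμP,
      ⟨fun w => if h : w ∈ Phim r m then p ⟨w, h⟩ else 0, ?_, ?_, ?_⟩, rfl⟩)
    · intro w hw
      simp [hw, hp0]
    · rw [tsum_fintype, ← hp1]
      exact Finset.sum_congr rfl fun w _ => by simp
    · refine hμ.trans ?_
      congr 1
      funext w
      simp only [w.2, dif_pos]
      rw [← compList_affine hf w.1]
  · refine sSup_le ?_
    rintro _ ⟨m, hm, μ, hμP, ⟨p, -, hp1, hμ⟩, rfl⟩
    have := hfin m hm
    have hμ' : μ = Measure.sum (fun w : {w : List (Fin n) // w ∈ Phim r m} =>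
        p w.1 • μ.map (fun x => ratioProd r w.1 * x + compList f w.1 0)) := by
      refine hμ.trans ?_
      congr 1
      funext w
      rw [← compList_affine hf w.1]
    have hμK : μ K = 1 := selfSimilar_support hμ' (by rw [← hp1, tsum_fintype]) hc0 hc
      (fun w => ⟨(Phim_ratio hc0 hc hrc he0.le he w.2).1.le,
        (Phim_ratio hc0 hc hrc he0.le he w.2).2.1⟩) hKne hKc (fun w => hKw w.1)
    refine iInf_le_of_le K (iInf_le_of_le hKc.isClosed.measurableSet (iInf_le_of_le ?_ le_rfl))
    rw [hμK]
    exact one_pos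
end
end

section
/- There exist real numbers v_1, v_2, v_3, v_4 > 0 such that: (i) for all i, j ∈ {1,2,3,4}, the ratio v_i/v_j is either rational or a Liouville number; and (ii) there exist C > 0, l > 0 and X > 0 such that for every x ∈ ℝ with |x| ≥ X, inf_{y∈ℝ} max_{1≤i≤4} dist(v_i·x + y, ℤ) ≥ C·|x|^{−l}. -/
/-!
Take `v = (1, 1 + E, 1 + √2 E, 2)` with `E = exp t` for a topologically generic real `t`.

Each ratio `v i / v j` is a Möbius function of `E`. It is either a rational constant or an open
continuous function of `t`, and preimages of residual sets under open continuous maps are residual.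
Liouville numbers are residual, so generically all nonconstant ratios are Liouville
(`eventually_liouville_ratio`).

For (ii), subtracting the first coordinate eliminates `y`: if all `v i * x + y` are within `δ` of
integers then `E x` and `√2 E x` are within `2δ` of integers `m` and `n`, so `√2 m - n` has size at
most `5δ`. As `√2` is badly approximable (`one_le_sqrt_two_approx`), this forces `δ ≫ 1 / |x|`, so
the exponent `l = 1` works.
-/

open Set

noncomputable section

theorem eventually_liouville_ratio {a b c d : ℝ} (hc : 0 < c) (hd : 0 ≤ d)
    (hdet : b * c - a * d ≠ 0) :
    ∀ᶠ t in residual ℝ, Liouville ((a + b * Real.exp t) / (c + d * Real.exp t)) := by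
  have hpos : ∀ t : ℝ, 0 < c + d * Real.exp t := fun t => by positivity
  have hderiv : ∀ t : ℝ, HasStrictDerivAt
      (fun t => (a + b * Real.exp t) / (c + d * Real.exp t))
      ((b * c - a * d) * Real.exp t / (c + d * Real.exp t) ^ 2) t := by
    intro t
    have h1 : HasStrictDerivAt (fun t => a + b * Real.exp t) (b * Real.exp t) t :=
      ((Real.hasStrictDerivAt_exp t).const_mul b).const_add a
    have h2 : HasStrictDerivAt (fun t => c + d * Real.exp t) (d * Real.exp t) t :=
      ((Real.hasStrictDerivAt_exp t).const_mul d).const_add c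
    refine (h1.fun_div h2 (hpos t).ne').congr_deriv ?_
    ring
  have hopen := isOpenMap_of_hasStrictDerivAt hderiv fun t =>
    div_ne_zero (mul_ne_zero hdet (Real.exp_pos t).ne') (pow_ne_zero 2 (hpos t).ne')
  have hcont : Continuous (fun t => (a + b * Real.exp t) / (c + d * Real.exp t)) :=
    continuous_iff_continuousAt.2 fun t => (hderiv t).hasDerivAt.continuousAt
  exact (tendsto_residual_of_isOpenMap hcont hopen).eventually eventually_residual_liouville

/-- `√2` is badly approximable: the product is at least `|2 m² - n²|`, a nonzero integer. -/
theorem one_le_sqrt_two_approx {m : ℤ} (n : ℤ) (hm : m ≠ 0) :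
    1 ≤ |√2 * m - n| * (√2 * |(m : ℝ)| + |(n : ℝ)|) := by
  have hs : √2 * √2 = (2 : ℝ) := Real.mul_self_sqrt (by norm_num)
  have hne : 2 * m ^ 2 - n ^ 2 ≠ 0 := by
    intro h
    have h' : (2 : ℝ) * m ^ 2 - n ^ 2 = 0 := by exact_mod_cast h
    have hm' : (m : ℝ) ≠ 0 := by exact_mod_cast hm
    have hfac : (√2 * m - n) * (√2 * m + n) = 0 := by linear_combination h' + (m : ℝ) ^ 2 * hs
    rcases mul_eq_zero.1 hfac with h0 | h0
    · exact irrational_sqrt_two ⟨(n : ℚ) / m, by push_cast; field_simp; linarith⟩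
    · exact irrational_sqrt_two ⟨-(n : ℚ) / m, by push_cast; field_simp; linarith⟩
  have h1 : (1 : ℝ) ≤ |2 * (m : ℝ) ^ 2 - n ^ 2| := by exact_mod_cast Int.one_le_abs hne
  have h2 : 2 * (m : ℝ) ^ 2 - n ^ 2 = (√2 * m - n) * (√2 * m + n) := by
    linear_combination -(m : ℝ) ^ 2 * hs
  rw [h2, abs_mul] at h1
  refine h1.trans (mul_le_mul_of_nonneg_left ((abs_add_le _ _).trans_eq ?_) (abs_nonneg _))
  rw [abs_mul, abs_of_nonneg (Real.sqrt_nonneg 2)]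

/-- Quantitative core of (ii): `E x` and `√2 E x` cannot both be too close to integers. -/
theorem not_both_near_int {E x δ : ℝ} (hE : 0 < E) (hx : 1 + 1 / E ≤ |x|)
    (hδ : δ = 1 / (25 * (E + 1)) * |x|⁻¹) (m n : ℤ)
    (hm : |E * x - m| < 2 * δ) (hn : |√2 * (E * x) - n| < 2 * δ) : False := by
  have hE' : 0 < 1 / E := by positivity
  have hx1 : 1 ≤ |x| := by linarith
  have hEx : 1 ≤ E * |x| := by
    calc (1 : ℝ) ≤ E * (1 + 1 / E) := by field_simp; linarith
      _ ≤ E * |x| := by gcongr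
  have hδx : δ * (25 * (E + 1) * |x|) = 1 := by
    rw [hδ]; field_simp
  have hδ0 : 0 < δ := by rw [hδ]; positivity
  have hδ1 : δ ≤ 1 / 25 := by nlinarith
  have hs0 : 0 ≤ √2 := Real.sqrt_nonneg 2
  have hs : √2 < 3 / 2 := by
    rw [Real.sqrt_lt' (by norm_num)]; norm_num
  have habs : |E * x| = E * |x| := by rw [abs_mul, abs_of_pos hE]
  have hm0 : m ≠ 0 := by
    rintro rfl
    simp only [Int.cast_zero, sub_zero, habs] at hm
    linarith
  have key := one_le_sqrt_two_approx n hm0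
  have hmB : |(m : ℝ)| ≤ E * |x| + 2 * δ := by
    have := abs_sub_abs_le_abs_sub (m : ℝ) (E * x)
    rw [abs_sub_comm, habs] at this
    linarith
  have hnB : |(n : ℝ)| ≤ √2 * (E * |x|) + 2 * δ := by
    have := abs_sub_abs_le_abs_sub (n : ℝ) (√2 * (E * x))
    rw [abs_sub_comm, abs_mul, abs_of_nonneg hs0, habs] at this
    linarith
  have h1 : |√2 * m - n| < 5 * δ := by
    have h3 : √2 * m - n = (√2 * (E * x) - n) - √2 * (E * x - m) := by ring
    have h4 := abs_sub (√2 * (E * x) - n) (√2 * (E * x - m))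
    rw [← h3, abs_mul, abs_of_nonneg hs0] at h4
    nlinarith [abs_nonneg (E * x - m)]
  have h2 : √2 * |(m : ℝ)| + |(n : ℝ)| ≤ 3 * (E * |x|) + 5 * δ := by
    nlinarith [abs_nonneg (m : ℝ)]
  have h5 : 0 < 3 * (E * |x|) + 5 * δ := by positivity
  have h6 : |√2 * m - n| * (√2 * |(m : ℝ)| + |(n : ℝ)|) < 5 * δ * (3 * (E * |x|) + 5 * δ) :=
    (mul_le_mul_of_nonneg_left h2 (abs_nonneg _)).trans_lt (mul_lt_mul_of_pos_right h1 h5)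
  have h7 : 5 * δ * (3 * (E * |x|) + 5 * δ) ≤ δ * (25 * (E + 1) * |x|) := by
    have : 5 * (3 * (E * |x|) + 5 * δ) ≤ 25 * (E + 1) * |x| := by nlinarith
    nlinarith
  linarith

theorem stmt19 :
    ∃ v : Fin 4 → ℝ, (∀ i, 0 < v i) ∧
      (∀ i j : Fin 4, (∃ q : ℚ, v i / v j = (q : ℝ)) ∨ Liouville (v i / v j)) ∧
      ∃ C l X : ℝ, 0 < C ∧ 0 < l ∧ 0 < X ∧
        ∀ x : ℝ, X ≤ |x| → ∀ y : ℝ,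
          ∃ i : Fin 4, C * |x| ^ (-l) ≤ |v i * x + y - (round (v i * x + y) : ℝ)| := by
  -- `v i = a i + b i * exp t`
  let a : Fin 4 → ℝ := ![1, 1, 1, 2]
  let b : Fin 4 → ℝ := ![0, 1, √2, 0]
  have ha : ∀ i, 0 < a i := by intro i; fin_cases i <;> norm_num [a]
  have hb : ∀ i, 0 ≤ b i := by intro i; fin_cases i <;> norm_num [b]
  have hgen : ∀ᶠ t in residual ℝ, ∀ i j : Fin 4, b i * a j - a i * b j ≠ 0 →
      Liouville ((a i + b i * Real.exp t) / (a j + b j * Real.exp t)) := by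
    refine Filter.eventually_all.2 fun i => Filter.eventually_all.2 fun j => ?_
    by_cases h : b i * a j - a i * b j = 0
    · exact Filter.Eventually.of_forall fun t h' => (h' h).elim
    · exact (eventually_liouville_ratio (ha j) (hb j) h).mono fun t ht _ => ht
  obtain ⟨t, ht⟩ := (dense_of_mem_residual hgen).nonempty
  have hE := Real.exp_pos t
  set E := Real.exp t with hEdef
  have hpos : ∀ i, 0 < a i + b i * E := fun i =>
    add_pos_of_pos_of_nonneg (ha i) (mul_nonneg (hb i) hE.le)
  refine ⟨fun i => a i + b i * E, hpos, ?_, 1 / (25 * (E + 1)), 1, 1 + 1 / E, by positivity,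
    one_pos, by positivity, ?_⟩
  · intro i j
    by_cases h : b i * a j - a i * b j = 0
    · -- A vanishing determinant makes the ratio the constant `a i / a j`, a quotient of integers.
      left
      have hq : (a i + b i * E) / (a j + b j * E) = a i / a j := by
        rw [div_eq_div_iff (hpos j).ne' (ha j).ne']
        linear_combination E * h
      have hrat : ∀ k, ∃ q : ℚ, a k = q := by
        intro k
        fin_cases k
        exacts [⟨1, by simp [a]⟩, ⟨1, by simp [a]⟩, ⟨1, by simp [a]⟩, ⟨2, by simp [a]⟩]
      obtain ⟨p, hp⟩ := hrat i
      obtain ⟨q, hq'⟩ := hrat j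
      exact ⟨p / q, by simp only [hq]; rw [hp, hq']; push_cast; rfl⟩
    · exact Or.inr (ht i j h)
  · intro x hx y
    by_contra! hcon
    have h0 := hcon 0
    have h1 := hcon 1
    have h2 := hcon 2
    simp only [a, b, Matrix.cons_val, Real.rpow_neg_one] at h0 h1 h2
    generalize round ((1 + 0 * E) * x + y) = n0 at h0
    generalize round ((1 + 1 * E) * x + y) = n1 at h1
    generalize round ((1 + √2 * E) * x + y) = n2 at h2
    rw [abs_lt] at h0 h1 h2
    refine not_both_near_int hE hx rfl (n1 - n0) (n2 - n0) ?_ ?_ <;>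
    · rw [abs_lt]
      push_cast
      constructor <;> linarith
end
end
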